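/- Let b > 0, c₁ > 0, c₂ ∈ ℝ, set s = √(c₂² + 8b²c₁), λ₊ = (−c₂ + s)/(4b²), and k² = (c₂ + s)/(2s). Let I ⊆ ℝ be an open interval and θ : I → ℝ a smooth function with cos θ(u) > 0 on I and θ'(u)² = s·(1 − k²·sin² θ(u)) on I. Then the function λ(u) = √λ₊ / cos θ(u) is smooth and positive on I and satisfies both λ'(u)² = −c₁ + c₂·λ(u)² + 2b²·λ(u)⁴ and λ''(u)·λ(u) − λ'(u)² = c₁ + 2b²·λ(u)⁴ on I; consequently the special Liouville metric λ(u)²(du² + dv²) has Gaussian curvature K = −2b² − c₁/λ⁴ < −2b² and satisfies the Ricci condition (1/λ²)(log √(−2b² − K))'' = 2K. -/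

import Mathlib

/-!
A conformal factor `l` enters the curvature `K` of `l² (du² + dv²)` only through its logarithmic
derivative: `K = -(l'/l)' / l²`. If `K = -2b² - c₁/l⁴`, then `log √(-2b² - K)` is a constant minus
`2 log l`, so its second derivative is `-2 (l'/l)' = 2 K l²`, which is the Ricci condition.
For `l = r / cos θ` one has `l'/l = θ' tan θ`. As `k² < 1` forces `θ' ≠ 0`, differentiating
`θ'² = s (1 - k² sin² θ)` gives `θ'' = -s k² sin θ cos θ`, so that both `(l'/l)²` and `(l'/l)'`
are combinations of `cos⁻² θ`, `1` and `cos² θ`, that is, of `l²`, `1` and `l⁻²`. The parameters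
of the theorem are chosen so that the coefficients are `2b²`, `c₂`, `-c₁` in the former and
`2b²`, `0`, `c₁` in the latter.
-/

open Filter Topology

section SecondDerivative

variable {𝕜 : Type*} [NontriviallyNormedField 𝕜]

theorem differentiableAt_deriv_of_contDiffAt_two {E : Type*} [NormedAddCommGroup E]
    [NormedSpace 𝕜 E] {f : 𝕜 → E} {x : 𝕜} (hf : ContDiffAt 𝕜 2 f x) :
    DifferentiableAt 𝕜 (deriv f) x :=
  (hf.derivWithin (m := 1) (by norm_num)).differentiableAt one_ne_zero

theorem sq_mul_deriv_logDeriv {f : 𝕜 → 𝕜} {x : 𝕜} (hf : ContDiffAt 𝕜 2 f x) (h0 : f x ≠ 0) :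
    f x ^ 2 * deriv (logDeriv f) x = deriv (deriv f) x * f x - deriv f x ^ 2 := by
  rw [logDeriv, deriv_div (differentiableAt_deriv_of_contDiffAt_two hf)
    (hf.differentiableAt two_ne_zero) h0]
  field_simp

theorem two_mul_deriv_deriv_of_deriv_sq_eq_comp {f F : 𝕜 → 𝕜} {F' x : 𝕜}
    (hf : DifferentiableAt 𝕜 (deriv f) x) (hf0 : deriv f x ≠ 0) (hF : HasDerivAt F F' (f x))
    (h : ∀ᶠ t in 𝓝 x, deriv f t ^ 2 = F (f t)) : 2 * deriv (deriv f) x = F' := by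
  have hleft : HasDerivAt (fun t ↦ deriv f t ^ 2) (2 * deriv f x * deriv (deriv f) x) x := by
    simpa using hf.hasDerivAt.fun_pow 2
  have hright : HasDerivAt (fun t ↦ deriv f t ^ 2) (F' * deriv f x) x :=
    (hF.comp x (differentiableAt_of_deriv_ne_zero hf0).hasDerivAt).congr_of_eventuallyEq h
  refine mul_left_cancel₀ hf0 ?_
  linear_combination hleft.unique hright

end SecondDerivative

/-- The Gaussian curvature of the special Liouville metric `l(u)² (du² + dv²)`, as a function of
`u` alone; meaningful where `l` is twice differentiable and nonzero. -/
noncomputable def liouvilleCurvature (l : ℝ → ℝ) (u : ℝ) : ℝ :=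
  (-(l u) * deriv (deriv l) u + (deriv l u) ^ 2) / (l u) ^ 4

section Liouville

variable {l : ℝ → ℝ} {u κ c : ℝ}

theorem liouvilleCurvature_eq_neg_deriv_logDeriv_div (hl : ContDiffAt ℝ 2 l u) (h0 : l u ≠ 0) :
    liouvilleCurvature l u = -deriv (logDeriv l) u / l u ^ 2 := by
  rw [liouvilleCurvature, div_eq_div_iff (pow_ne_zero 4 h0) (pow_ne_zero 2 h0)]
  linear_combination l u ^ 2 * sq_mul_deriv_logDeriv hl h0

theorem liouvilleCurvature_eq_sub_div (h0 : l u ≠ 0)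
    (h : deriv (deriv l) u * l u - deriv l u ^ 2 = c - κ * l u ^ 4) :
    liouvilleCurvature l u = κ - c / l u ^ 4 := by
  rw [liouvilleCurvature, div_eq_iff (pow_ne_zero 4 h0), sub_mul, div_mul_cancel₀ _ (by positivity)]
  linear_combination -h

theorem log_sqrt_div_pow_four {x : ℝ} (hc : 0 < c) (hx : x ≠ 0) :
    Real.log √(c / x ^ 4) = Real.log c / 2 - 2 * Real.log x := by
  rw [Real.log_sqrt (by positivity), Real.log_div hc.ne' (by positivity), Real.log_pow]
  push_cast
  ring

theorem ricci_condition_of_liouvilleCurvature_eq (hc : 0 < c) (hl : ContDiffAt ℝ 2 l u)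
    (h0 : l u ≠ 0) (hK : ∀ᶠ t in 𝓝 u, liouvilleCurvature l t = κ - c / l t ^ 4) :
    1 / l u ^ 2 * deriv (deriv fun t ↦ Real.log √(κ - liouvilleCurvature l t)) u =
      2 * liouvilleCurvature l u := by
  have hne : ∀ᶠ t in 𝓝 u, l t ≠ 0 := hl.continuousAt.eventually_ne h0
  have hlog : (fun t ↦ Real.log √(κ - liouvilleCurvature l t)) =ᶠ[𝓝 u]
      fun t ↦ Real.log c / 2 - 2 * Real.log (l t) := by
    filter_upwards [hK, hne] with t hKt ht
    rw [hKt, sub_sub_cancel, log_sqrt_div_pow_four hc ht]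
  have hderiv : (deriv fun t ↦ Real.log c / 2 - 2 * Real.log (l t)) =ᶠ[𝓝 u]
      fun t ↦ -(2 * logDeriv l t) := by
    filter_upwards [hl.eventually (by simp), hne] with t hlt ht
    rw [deriv_const_sub, deriv_const_mul_field, deriv.log (hlt.differentiableAt two_ne_zero) ht,
      logDeriv_apply]
  rw [(hlog.deriv.trans hderiv).deriv_eq, deriv.fun_neg, deriv_const_mul_field,
    liouvilleCurvature_eq_neg_deriv_logDeriv_div hl h0]
  ring

end Liouville

/-- The conformal factor `r / cos θ`: a multiple of the reciprocal of Jacobi's `cn` when `θ` is a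
Jacobi amplitude. -/
noncomputable def secConformalFactor (r : ℝ) (θ : ℝ → ℝ) (u : ℝ) : ℝ :=
  r / Real.cos (θ u)

section SecConformalFactor

variable {r u : ℝ} {θ : ℝ → ℝ}

theorem contDiffAt_secConformalFactor {n : WithTop ℕ∞} (hθ : ContDiffAt ℝ n θ u)
    (hcos : Real.cos (θ u) ≠ 0) : ContDiffAt ℝ n (secConformalFactor r θ) u :=
  contDiffAt_const.div hθ.cos hcos

theorem logDeriv_secConformalFactor (hr : r ≠ 0) (hθ : DifferentiableAt ℝ θ u)
    (hcos : Real.cos (θ u) ≠ 0) :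
    logDeriv (secConformalFactor r θ) u = Real.tan (θ u) * deriv θ u := by
  have hlogcos : logDeriv (fun t ↦ Real.cos (θ t)) u = -Real.tan (θ u) * deriv θ u := by
    simpa only [Real.logDeriv_cos] using! logDeriv_comp Real.differentiableAt_cos hθ
  change logDeriv (fun t ↦ r / Real.cos (θ t)) u = _
  rw [logDeriv_div u hr hcos (differentiableAt_const r) hθ.cos, hlogcos, logDeriv_const,
    Pi.zero_apply, zero_sub, neg_mul, neg_neg]

end SecConformalFactor

/-- `θ` is a `C²` solution, near `u`, of the equation `θ'² = s (1 - k² sin² θ)` of Jacobi's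
amplitude function, with modulus `k` and with `u` rescaled by `√s`. -/
structure IsJacobiAmplitudeAt (s k : ℝ) (θ : ℝ → ℝ) (u : ℝ) : Prop where
  contDiffAt : ContDiffAt ℝ 2 θ u
  eventually_deriv_sq : ∀ᶠ t in 𝓝 u, deriv θ t ^ 2 = s * (1 - k ^ 2 * Real.sin (θ t) ^ 2)

namespace IsJacobiAmplitudeAt

variable {s k r u : ℝ} {θ : ℝ → ℝ}

theorem deriv_sq (h : IsJacobiAmplitudeAt s k θ u) :
    deriv θ u ^ 2 = s * (1 - k ^ 2 * Real.sin (θ u) ^ 2) :=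
  h.eventually_deriv_sq.self_of_nhds

theorem differentiableAt (h : IsJacobiAmplitudeAt s k θ u) : DifferentiableAt ℝ θ u :=
  h.contDiffAt.differentiableAt two_ne_zero

theorem deriv_ne_zero (h : IsJacobiAmplitudeAt s k θ u) (hs : s ≠ 0) (hk : k ^ 2 < 1) :
    deriv θ u ≠ 0 := by
  have hlt : k ^ 2 * Real.sin (θ u) ^ 2 < 1 :=
    (mul_le_of_le_one_right (sq_nonneg k) (Real.sin_sq_le_one _)).trans_lt hk
  rw [← pow_ne_zero_iff two_ne_zero, h.deriv_sq]
  exact mul_ne_zero hs (sub_pos.2 hlt).ne'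

theorem deriv_deriv (h : IsJacobiAmplitudeAt s k θ u) (hs : s ≠ 0) (hk : k ^ 2 < 1) :
    deriv (deriv θ) u = -(s * k ^ 2 * Real.sin (θ u) * Real.cos (θ u)) := by
  have hF : HasDerivAt (fun x ↦ s * (1 - k ^ 2 * Real.sin x ^ 2))
      (s * -(k ^ 2 * (2 * Real.sin (θ u) * Real.cos (θ u)))) (θ u) := by
    have hsin_sq := (Real.hasDerivAt_sin (θ u)).fun_pow 2
    simpa using ((hsin_sq.const_mul (k ^ 2)).const_sub 1).const_mul s
  linear_combination (two_mul_deriv_deriv_of_deriv_sq_eq_comp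
    (differentiableAt_deriv_of_contDiffAt_two h.contDiffAt) (h.deriv_ne_zero hs hk) hF
    h.eventually_deriv_sq) / 2

theorem logDeriv_secConformalFactor_sq (h : IsJacobiAmplitudeAt s k θ u) (hr : r ≠ 0)
    (hcos : Real.cos (θ u) ≠ 0) :
    logDeriv (secConformalFactor r θ) u ^ 2 =
      s * (1 - k ^ 2) / Real.cos (θ u) ^ 2 + s * (2 * k ^ 2 - 1)
        - s * k ^ 2 * Real.cos (θ u) ^ 2 := by
  rw [logDeriv_secConformalFactor hr h.differentiableAt hcos, mul_pow, h.deriv_sq,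
    Real.tan_eq_sin_div_cos, div_pow, Real.sin_sq]
  field_simp
  ring

theorem deriv_logDeriv_secConformalFactor (h : IsJacobiAmplitudeAt s k θ u) (hs : s ≠ 0)
    (hk : k ^ 2 < 1) (hr : r ≠ 0) (hcos : Real.cos (θ u) ≠ 0) :
    deriv (logDeriv (secConformalFactor r θ)) u =
      s * (1 - k ^ 2) / Real.cos (θ u) ^ 2 + s * k ^ 2 * Real.cos (θ u) ^ 2 := by
  have hlogDeriv : logDeriv (secConformalFactor r θ) =ᶠ[𝓝 u]
      fun t ↦ Real.tan (θ t) * deriv θ t := by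
    filter_upwards [h.contDiffAt.eventually (by simp),
      h.contDiffAt.cos.continuousAt.eventually_ne hcos] with t hθ hcos
    exact logDeriv_secConformalFactor hr (hθ.differentiableAt two_ne_zero) hcos
  have htan : HasDerivAt (fun t ↦ Real.tan (θ t)) (1 / Real.cos (θ u) ^ 2 * deriv θ u) u :=
    (Real.hasDerivAt_tan hcos).comp u h.differentiableAt.hasDerivAt
  have hθ' := (differentiableAt_deriv_of_contDiffAt_two h.contDiffAt).hasDerivAt
  calc deriv (logDeriv (secConformalFactor r θ)) u
      = deriv θ u ^ 2 / Real.cos (θ u) ^ 2 + Real.tan (θ u) * deriv (deriv θ) u := by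
        rw [hlogDeriv.deriv_eq, (htan.fun_mul hθ').deriv]
        ring
    _ = s * (1 - k ^ 2) / Real.cos (θ u) ^ 2 + s * k ^ 2 * Real.cos (θ u) ^ 2 := by
        rw [h.deriv_sq, h.deriv_deriv hs hk, Real.tan_eq_sin_div_cos]
        field_simp
        rw [Real.sin_sq]
        ring

theorem deriv_secConformalFactor_sq (h : IsJacobiAmplitudeAt s k θ u) (hr : r ≠ 0)
    (hcos : Real.cos (θ u) ≠ 0) :
    deriv (secConformalFactor r θ) u ^ 2 =
      -(s * k ^ 2 * r ^ 2) + s * (2 * k ^ 2 - 1) * secConformalFactor r θ u ^ 2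
        + s * (1 - k ^ 2) / r ^ 2 * secConformalFactor r θ u ^ 4 := by
  have hl : secConformalFactor r θ u ≠ 0 := div_ne_zero hr hcos
  have hsq := h.logDeriv_secConformalFactor_sq hr hcos
  rw [logDeriv_apply, div_pow, div_eq_iff (pow_ne_zero 2 hl)] at hsq
  rw [hsq, secConformalFactor]
  field_simp
  ring

theorem secConformalFactor_curvature_equation (h : IsJacobiAmplitudeAt s k θ u) (hs : s ≠ 0)
    (hk : k ^ 2 < 1) (hr : r ≠ 0) (hcos : Real.cos (θ u) ≠ 0) :
    deriv (deriv (secConformalFactor r θ)) u * secConformalFactor r θ u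
        - deriv (secConformalFactor r θ) u ^ 2 =
      s * k ^ 2 * r ^ 2 + s * (1 - k ^ 2) / r ^ 2 * secConformalFactor r θ u ^ 4 := by
  rw [← sq_mul_deriv_logDeriv (contDiffAt_secConformalFactor h.contDiffAt hcos)
    (div_ne_zero hr hcos), h.deriv_logDeriv_secConformalFactor hs hk hr hcos, secConformalFactor]
  field_simp
  ring

end IsJacobiAmplitudeAt

theorem abs_lt_sqrt_sq_add {c d : ℝ} (hd : 0 < d) : |c| < √(c ^ 2 + d) := by
  rw [Real.lt_sqrt (abs_nonneg c), sq_abs]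
  exact lt_add_of_pos_right _ hd

section Parameters

variable {b c₁ c₂ s : ℝ}

theorem neg_add_div_pos (hb : b ≠ 0) (hs : |c₂| < s) : 0 < (-c₂ + s) / (4 * b ^ 2) :=
  div_pos (by linarith [le_abs_self c₂]) (by positivity)

theorem add_div_two_mul_self_lt_one (hs : |c₂| < s) : (c₂ + s) / (2 * s) < 1 := by
  have hs0 : 0 < s := (abs_nonneg c₂).trans_lt hs
  rw [div_lt_one (by positivity)]
  linarith [le_abs_self c₂]

theorem quartic_coefficient_eq (hb : b ≠ 0) (hs : |c₂| < s) :
    s * (1 - (c₂ + s) / (2 * s)) / ((-c₂ + s) / (4 * b ^ 2)) = 2 * b ^ 2 := by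
  have hs0 : s ≠ 0 := ((abs_nonneg c₂).trans_lt hs).ne'
  rw [div_eq_iff (neg_add_div_pos hb hs).ne']
  field_simp
  ring

theorem quadratic_coefficient_eq (hs : s ≠ 0) : s * (2 * ((c₂ + s) / (2 * s)) - 1) = c₂ := by
  field_simp
  ring

theorem constant_coefficient_eq (hb : b ≠ 0) (hs : s ≠ 0)
    (hsq : s ^ 2 = c₂ ^ 2 + 8 * b ^ 2 * c₁) :
    s * ((c₂ + s) / (2 * s)) * ((-c₂ + s) / (4 * b ^ 2)) = c₁ := by
  field_simp
  linear_combination hsq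

theorem secConformalFactor_coefficients {m p : ℝ} (hb : b ≠ 0) (hs : |c₂| < s)
    (hsq : s ^ 2 = c₂ ^ 2 + 8 * b ^ 2 * c₁) (hp : p = (-c₂ + s) / (4 * b ^ 2))
    (hm : m = (c₂ + s) / (2 * s)) :
    s * m * √p ^ 2 = c₁ ∧ s * (2 * m - 1) = c₂ ∧ s * (1 - m) / √p ^ 2 = 2 * b ^ 2 := by
  have hs0 : s ≠ 0 := ((abs_nonneg c₂).trans_lt hs).ne'
  have hp0 : 0 ≤ p := hp ▸ (neg_add_div_pos hb hs).le
  rw [Real.sq_sqrt hp0, hp, hm]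
  exact ⟨constant_coefficient_eq hb hs0 hsq, quadratic_coefficient_eq hs0,
    quartic_coefficient_eq hb hs⟩

end Parameters

/-- If `θ'² = s(1 - k² sin²θ)` with `cos θ > 0`, then `λ = √λ₊ / cos θ` is a
smooth positive solution of the curvature equation and its first integral; the associated
special Liouville metric has curvature `K = -2b² - c₁/λ⁴ < -2b²` and satisfies the
Ricci condition. -/
theorem stmt_8 (b c₁ c₂ s lamPlus k : ℝ) (I : Set ℝ) (hI : IsOpen I) (hI' : I.OrdConnected) (hb : 0 < b) (hc₁ : 0 < c₁)
    (hs : s = Real.sqrt (c₂ ^ 2 + 8 * b ^ 2 * c₁))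
    (hlamPlus : lamPlus = (-c₂ + s) / (4 * b ^ 2))
    (hk : k ^ 2 = (c₂ + s) / (2 * s))
    (θ : ℝ → ℝ) (hθ : ContDiffOn ℝ (⊤ : ℕ∞) θ (I))
    (hcos : ∀ u ∈ I, 0 < Real.cos (θ u))
    (hθ' : ∀ u ∈ I,
      (deriv θ u) ^ 2 = s * (1 - k ^ 2 * Real.sin (θ u) ^ 2))
    (lam : ℝ → ℝ) (hlam : ∀ u, lam u = Real.sqrt lamPlus / Real.cos (θ u))
    (K : ℝ → ℝ)
    (hK : ∀ u, K u =
      (-(lam u) * deriv (deriv lam) u + (deriv lam u) ^ 2) / (lam u) ^ 4) :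
    ContDiffOn ℝ (⊤ : ℕ∞) lam (I) ∧
    (∀ u ∈ I, 0 < lam u) ∧
    (∀ u ∈ I,
      (deriv lam u) ^ 2 = -c₁ + c₂ * (lam u) ^ 2 + 2 * b ^ 2 * (lam u) ^ 4) ∧
    (∀ u ∈ I,
      deriv (deriv lam) u * lam u - (deriv lam u) ^ 2 = c₁ + 2 * b ^ 2 * (lam u) ^ 4) ∧
    (∀ u ∈ I,
      K u = -2 * b ^ 2 - c₁ / (lam u) ^ 4 ∧ K u < -2 * b ^ 2) ∧
    (∀ u ∈ I,
      (1 / (lam u) ^ 2) *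
        deriv (deriv (fun t => Real.log (Real.sqrt (-2 * b ^ 2 - K t)))) u = 2 * K u) := by
  have hsc : |c₂| < s := hs ▸ abs_lt_sqrt_sq_add (by positivity)
  have hs0 : s ≠ 0 := ((abs_nonneg c₂).trans_lt hsc).ne'
  have hr : 0 < √lamPlus := Real.sqrt_pos.2 (hlamPlus ▸ neg_add_div_pos hb.ne' hsc)
  have hk1 : k ^ 2 < 1 := hk ▸ add_div_two_mul_self_lt_one hsc
  obtain ⟨hconst, hquad, hquart⟩ := secConformalFactor_coefficients hb.ne' hsc
    (hs ▸ Real.sq_sqrt (by positivity)) hlamPlus hk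
  obtain rfl : lam = secConformalFactor √lamPlus θ := funext hlam
  obtain rfl : K = liouvilleCurvature (secConformalFactor √lamPlus θ) := funext hK
  have hnhds : ∀ u ∈ I, I ∈ 𝓝 u := fun u hu ↦ hI.mem_nhds hu
  have hamp : ∀ u ∈ I, IsJacobiAmplitudeAt s k θ u := fun u hu ↦
    ⟨contDiffAt_infty.1 (hθ.contDiffAt (hnhds u hu)) 2, eventually_of_mem (hnhds u hu) hθ'⟩
  have hpos : ∀ u ∈ I, 0 < secConformalFactor √lamPlus θ u := fun u hu ↦ div_pos hr (hcos u hu)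
  have hcurv := fun u hu ↦
    (hamp u hu).secConformalFactor_curvature_equation hs0 hk1 hr.ne' (hcos u hu).ne'
  rw [hconst, hquart] at hcurv
  have hKeq : ∀ u ∈ I, liouvilleCurvature (secConformalFactor √lamPlus θ) u =
      -2 * b ^ 2 - c₁ / secConformalFactor √lamPlus θ u ^ 4 := fun u hu ↦
    liouvilleCurvature_eq_sub_div (hpos u hu).ne' ((hcurv u hu).trans (by ring))
  refine ⟨contDiffOn_const.div hθ.cos fun u hu ↦ (hcos u hu).ne', hpos, fun u hu ↦ ?_, hcurv,
    fun u hu ↦ ⟨hKeq u hu, ?_⟩, fun u hu ↦ ricci_condition_of_liouvilleCurvature_eq hc₁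
      (contDiffAt_secConformalFactor (hamp u hu).contDiffAt (hcos u hu).ne') (hpos u hu).ne'
      (eventually_of_mem (hnhds u hu) hKeq)⟩
  · rw [(hamp u hu).deriv_secConformalFactor_sq hr.ne' (hcos u hu).ne', hconst, hquad, hquart]
  · exact hKeq u hu ▸ sub_lt_self _ (div_pos hc₁ (pow_pos (hpos u hu) 4))
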